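/- Let k ≥ 3 and let H'_k be the (2k−2)-vertex graph obtained by gluing two complete graphs on k vertices along a single common edge e (so the two cliques share exactly the two endpoints of e) and then adding one further edge e' between two non-adjacent vertices (one from each clique). Then there exist constants c₁, c₂ > 0 and n₀ ∈ ℕ such that c₁·n ≤ M_{H'_k}(n) ≤ c₂·n for all n ≥ n₀; that is, M_{H'_k}(n) = Θ(n). -/

import Mathlib

/-!
Write `G_i` for the process started from `G`. A missing edge `uv` is added in the next step exactly
when `H'_k` embeds into `G_i + uv` using `uv`. Both bounds rest on a merging property
(`isClique_union_bootStep`): two cliques of order at least `k` that share two vertices and have at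
least `2k - 2` vertices together become one clique in a single step. In particular every copy of
`H'_k` spans a `K_{2k-2}` one step later.

**Upper bound.** An edge `e_i` that is new at time `i + 1` uses an edge `e_{i-1}` that was new at
time `i` (otherwise `e_i` would have been added earlier), and so on down to `e_0`. The
corresponding copies of `H'_k` share consecutive edges, so they merge one after the other: the union
`Q_j` of the first `j + 1` copies is a clique at time `j + 3`. Since `e_{j+3}` is still missing then,
`Q_{j+3}` is strictly larger than `Q_j`. Hence `i / 3 ≤ n` (`exists_clique_chain`,
`le_of_bootProcess_ne`), and the running time is at most `3n + 3`.

**Lower bound.** Start with a clique (level `0`) and levels `1, 2, …` of `k - 2` vertices each. Level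
`j` is a clique, joined completely to one vertex `p_{j-1}` of level `j - 1` and to one of two fixed
vertices of level `0`, alternating with the parity of `j`; these two attachment vertices are not
joined to each other by the construction (`towerGraph`). At time `t` the levels `0, …, t` form a
clique, and level `t + 1` has just acquired two neighbours in it, so it is absorbed in the next
step. Nothing else happens: every triangle at time `t` lies in levels up to `t + 1` or in the block
of a single higher level (`towerGraph_no_peak`), while `H'_k` minus any edge is connected through
triangles (`twoGluedCliques_edge_const`), so that a new copy of `H'_k`, being too large for a
block, must lie in levels up to `t + 1`. The process thus runs for about `n / (k - 2)` steps.
-/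

open SimpleGraph

/-- The number of subgraphs of `G` isomorphic to `H`. -/
noncomputable def numCopies {α β : Type*} (H : SimpleGraph α) (G : SimpleGraph β) : ℕ :=
  {G' : G.Subgraph | Nonempty (G'.coe ≃g H)}.ncard

/-- One step of the `H`-bootstrap process: add every missing edge whose addition
creates a new copy of `H`. -/
noncomputable def bootStep {α β : Type*} (H : SimpleGraph α) (G : SimpleGraph β) :
    SimpleGraph β :=
  G ⊔ SimpleGraph.fromRel (fun u v =>
    numCopies H G < numCopies H (G ⊔ SimpleGraph.fromEdgeSet {s(u, v)}))

/-- The `H`-bootstrap process `(G_i)_{i ≥ 0}` on the starting graph `G`. -/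
noncomputable def bootProcess {α β : Type*} (H : SimpleGraph α) (G : SimpleGraph β) :
    ℕ → SimpleGraph β
  | 0 => G
  | i + 1 => bootStep H (bootProcess H G i)

/-- The running time `τ_H(G)` of the `H`-bootstrap process on `G`. -/
noncomputable def runningTime {α β : Type*} (H : SimpleGraph α) (G : SimpleGraph β) : ℕ :=
  sInf {t | bootProcess H G t = bootProcess H G (t + 1)}

/-- `M_H(n)`, the maximum running time of the `H`-bootstrap process over all
`n`-vertex starting graphs. -/
noncomputable def maxRunningTime {α : Type*} (H : SimpleGraph α) (n : ℕ) : ℕ :=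
  sSup {t | ∃ G : SimpleGraph (Fin n), runningTime H G = t}

/-- The graph `H'_k` on `2k − 2` vertices: two `k`-cliques, on `{0, …, k−1}` and on
`{0, 1} ∪ {k, …, 2k−3}`, glued along the common edge `{0, 1}`, together with one
further edge `e'` between the non-adjacent vertices `2` (of the first clique) and `k`
(of the second clique). -/
def twoGluedCliques (k : ℕ) : SimpleGraph (Fin (2 * k - 2)) :=
  SimpleGraph.fromRel (fun u v =>
    (u.val < k ∧ v.val < k) ∨
    ((u.val < 2 ∨ k ≤ u.val) ∧ (v.val < 2 ∨ k ≤ v.val)) ∨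
    (u.val = 2 ∧ v.val = k))


/-! ### New copies and one step of the process -/

/-- The copy `f(H)` recorded as a vertex set together with an adjacency relation. -/
def copyData {α β : Type*} (H : SimpleGraph α) (f : α → β) : Set β × (β → β → Prop) :=
  (Set.range f, Relation.Map H.Adj f f)

/-- The copies of `H` in `G`, as vertex sets with adjacency relations. Unlike subgraphs of `G`,
these live in a type that does not depend on `G`, so copies in `G` and in `G + e` can be
compared directly. -/
def copySet {α β : Type*} (H : SimpleGraph α) (G : SimpleGraph β) :
    Set (Set β × (β → β → Prop)) :=
  {p | ∃ f : α → β, Function.Injective f ∧ (∀ a b, H.Adj a b → G.Adj (f a) (f b)) ∧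
    p = copyData H f}

lemma numCopies_eq_ncard_copySet {α β : Type*} (H : SimpleGraph α) (G : SimpleGraph β) :
    numCopies H G = (copySet H G).ncard := by
  unfold numCopies
  have hinj : Function.Injective
      (fun S : G.Subgraph => ((S.verts, S.Adj) : Set β × (β → β → Prop))) := by
    intro S T h
    simp only [Prod.mk.injEq] at h
    exact Subgraph.ext h.1 h.2
  rw [← Set.ncard_image_of_injective _ hinj]
  congr 1
  ext p
  constructor
  · rintro ⟨S, ⟨φ⟩, rfl⟩
    refine ⟨fun a => (φ.symm a : β), fun a b h => φ.symm.injective (Subtype.ext h), ?_, ?_⟩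
    · intro a b h
      have : S.coe.Adj (φ.symm a) (φ.symm b) := φ.symm.map_rel_iff.2 h
      exact S.adj_sub this
    · refine Prod.ext ?_ ?_
      · ext x
        constructor
        · intro hx
          exact ⟨φ ⟨x, hx⟩, by simp⟩
        · rintro ⟨a, rfl⟩
          exact (φ.symm a).2
      · funext x y
        apply propext
        constructor
        · intro h
          have hx := S.edge_vert h
          have hy := S.edge_vert h.symm
          refine ⟨φ ⟨x, hx⟩, φ ⟨y, hy⟩, φ.map_rel_iff.2 h, by simp, by simp⟩
        · rintro ⟨a, b, h, rfl, rfl⟩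
          exact φ.symm.map_rel_iff.2 h
  · rintro ⟨f, hf, hG, rfl⟩
    let S : G.Subgraph :=
      { verts := Set.range f
        Adj := Relation.Map H.Adj f f
        adj_sub := by
          rintro x y ⟨a, b, h, rfl, rfl⟩
          exact hG a b h
        edge_vert := by
          rintro x y ⟨a, b, h, rfl, rfl⟩
          exact ⟨a, rfl⟩
        symm := ⟨by
          rintro x y ⟨a, b, h, rfl, rfl⟩
          exact ⟨b, a, h.symm, rfl, rfl⟩⟩ }
    refine ⟨S, ⟨Iso.symm ⟨Equiv.ofInjective f hf, ?_⟩⟩, rfl⟩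
    intro a b
    constructor
    · rintro ⟨a', b', h, h1, h2⟩
      rw [← hf h1, ← hf h2]
      exact h
    · intro h
      exact ⟨a, b, h, rfl, rfl⟩

/-- `NewCopy H G u v f`: the map `f` embeds `H` into `G + uv` and uses the edge `uv`. -/
def NewCopy {α β : Type*} (H : SimpleGraph α) (G : SimpleGraph β) (u v : β) (f : α → β) : Prop :=
  Function.Injective f ∧ (∀ a b, H.Adj a b → G.Adj (f a) (f b) ∨ s(f a, f b) = s(u, v)) ∧
    ∃ a b, H.Adj a b ∧ f a = u ∧ f b = v

lemma NewCopy.ne {α β : Type*} {H : SimpleGraph α} {G : SimpleGraph β} {u v : β} {f : α → β}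
    (h : NewCopy H G u v f) : u ≠ v := by
  obtain ⟨hf, -, a, b, hab, rfl, rfl⟩ := h
  exact fun h => hab.ne (hf h)

lemma numCopies_lt_iff {α β : Type*} [Finite β] (H : SimpleGraph α) (G : SimpleGraph β) {u v : β}
    (huv : u ≠ v) (hG : ¬ G.Adj u v) :
    numCopies H G < numCopies H (G ⊔ SimpleGraph.fromEdgeSet {s(u, v)}) ↔
      ∃ f, NewCopy H G u v f := by
  rw [numCopies_eq_ncard_copySet, numCopies_eq_ncard_copySet]
  have hsub : copySet H G ⊆ copySet H (G ⊔ SimpleGraph.fromEdgeSet {s(u, v)}) := by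
    rintro p ⟨f, hf, h, rfl⟩
    exact ⟨f, hf, fun a b hab => Or.inl (h a b hab), rfl⟩
  constructor
  · intro hlt
    have hns : ¬ copySet H (G ⊔ SimpleGraph.fromEdgeSet {s(u, v)}) ⊆ copySet H G := fun h =>
      absurd (Set.ncard_le_ncard h (Set.toFinite _)) (not_le.2 hlt)
    obtain ⟨p, ⟨f, hf, h, rfl⟩, hp⟩ := Set.not_subset.1 hns
    have h' : ∀ a b, H.Adj a b → G.Adj (f a) (f b) ∨ s(f a, f b) = s(u, v) := by
      intro a b hab
      rcases h a b hab with h1 | h1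
      · exact Or.inl h1
      · exact Or.inr (by simpa using h1.1)
    refine ⟨f, hf, h', ?_⟩
    by_contra hno
    push Not at hno
    refine hp ⟨f, hf, fun a b hab => (h' a b hab).resolve_right fun he => ?_, rfl⟩
    rcases Sym2.eq_iff.1 he with ⟨h1, h2⟩ | ⟨h1, h2⟩
    · exact hno a b hab h1 h2
    · exact hno b a hab.symm h2 h1
  · rintro ⟨f, hf, h, a, b, hab, rfl, rfl⟩
    refine Set.ncard_lt_ncard ⟨hsub, Set.not_subset.2 ⟨copyData H f, ⟨f, hf, ?_, rfl⟩, ?_⟩⟩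
      (Set.toFinite _)
    · intro c d hcd
      rcases h c d hcd with h1 | h1
      · exact Or.inl h1
      · exact Or.inr ⟨by simpa using h1, fun h2 => hcd.ne (hf h2)⟩
    · rintro ⟨g, hg, hgG, heq⟩
      have h2 := congrFun (congrFun (congrArg Prod.snd heq) (f a)) (f b)
      have h3 : Relation.Map H.Adj f f (f a) (f b) := ⟨a, b, hab, rfl, rfl⟩
      have h4 : Relation.Map H.Adj g g (f a) (f b) := by
        have := h2.mp h3
        exact this
      obtain ⟨c, d, hcd, hc, hd⟩ := h4
      exact hG (hc ▸ hd ▸ hgG c d hcd)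

lemma NewCopy.symm {α β : Type*} {H : SimpleGraph α} {G : SimpleGraph β} {u v : β} {f : α → β}
    (h : NewCopy H G u v f) : NewCopy H G v u f := by
  obtain ⟨hf, h1, a, b, hab, ha, hb⟩ := h
  exact ⟨hf, by rwa [Sym2.eq_swap], b, a, hab.symm, hb, ha⟩

lemma bootStep_adj {α β : Type*} [Finite β] (H : SimpleGraph α) (G : SimpleGraph β) (u v : β) :
    (bootStep H G).Adj u v ↔ G.Adj u v ∨ ∃ f, NewCopy H G u v f := by
  by_cases hG : G.Adj u v
  · simp [bootStep, hG]
  by_cases huv : u = v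
  · subst huv
    simp only [SimpleGraph.irrefl, false_or, false_iff]
    rintro ⟨f, hf⟩
    exact hf.ne rfl
  have hsymm : (∃ f, NewCopy H G v u f) ↔ ∃ f, NewCopy H G u v f :=
    ⟨fun ⟨f, h⟩ => ⟨f, h.symm⟩, fun ⟨f, h⟩ => ⟨f, h.symm⟩⟩
  simp only [bootStep, SimpleGraph.sup_adj, SimpleGraph.fromRel_adj, hG, false_or, ne_eq, huv,
    not_false_eq_true, true_and]
  rw [numCopies_lt_iff H G huv hG,
    numCopies_lt_iff H G (Ne.symm huv) (fun h => hG h.symm), hsymm, or_self]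

lemma le_bootStep {α β : Type*} (H : SimpleGraph α) (G : SimpleGraph β) : G ≤ bootStep H G :=
  le_sup_left

lemma bootProcess_mono {α β : Type*} (H : SimpleGraph α) (G : SimpleGraph β) :
    Monotone (bootProcess H G) :=
  monotone_nat_of_le_succ fun _ => le_bootStep _ _

/-! ### Merging cliques -/

lemma exists_enum {β : Type*} [DecidableEq β] (S : Finset β) (u : β) (hu : u ∈ S) :
    ∃ g : ℕ → β, g 0 = u ∧ (∀ i < S.card, g i ∈ S) ∧
      ∀ i < S.card, ∀ j < S.card, g i = g j → i = j := by
  set l : List β := u :: (S.erase u).toList with hl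
  have hlen : l.length = S.card := by
    simp [hl, Finset.card_erase_of_mem hu]
    have := Finset.card_pos.2 ⟨u, hu⟩
    omega
  have hnd : l.Nodup := by
    simp [hl, Finset.nodup_toList]
  refine ⟨fun i => l.getD i u, by simp [hl], ?_, ?_⟩
  · intro i hi
    have hi' : i < l.length := hlen ▸ hi
    have : l.getD i u ∈ l := by
      rw [List.getD_eq_getElem _ _ hi']
      exact List.getElem_mem hi'
    simp only [hl, List.mem_cons, Finset.mem_toList, Finset.mem_erase] at this
    rcases this with h | h
    · rw [← hl] at h
      simp only [h, hu]
    · exact h.2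
  · intro i hi j hj h
    have hi' : i < l.length := hlen ▸ hi
    have hj' : j < l.length := hlen ▸ hj
    simp only [List.getD_eq_getElem _ _ hi', List.getD_eq_getElem _ _ hj'] at h
    exact (List.Nodup.getElem_inj_iff hnd).1 h

lemma twoGluedCliques_adj {k : ℕ} (a b : Fin (2 * k - 2)) :
    (twoGluedCliques k).Adj a b ↔ a.val ≠ b.val ∧
      ((a.val < k ∧ b.val < k) ∨
      ((a.val < 2 ∨ k ≤ a.val) ∧ (b.val < 2 ∨ k ≤ b.val)) ∨
      (a.val = 2 ∧ b.val = k) ∨ (b.val = 2 ∧ a.val = k)) := by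
  simp only [twoGluedCliques, SimpleGraph.fromRel_adj, ne_eq, Fin.ext_iff]
  tauto

/-- A copy of `H'_k` is assembled from its parts: the common edge `xy`, the two remaining
`(k-2)`-sets `A'` and `B'`, and the extra edge `uv`, which is allowed to be missing. -/
lemma exists_newCopy_of_parts {β : Type*} [DecidableEq β] {k : ℕ} (hk : 3 ≤ k)
    {G : SimpleGraph β} {x y u v : β} {A B : Finset β} (hxy : x ≠ y)
    (hxA : x ∉ A) (hyA : y ∉ A) (hxB : x ∉ B) (hyB : y ∉ B) (hAB : Disjoint A B)
    (hA : A.card = k - 2) (hB : B.card = k - 2) (hu : u ∈ A) (hv : v ∈ B)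
    (hcA : G.IsClique (insert x (insert y (A : Set β))))
    (hcB : G.IsClique (insert x (insert y (B : Set β)))) :
    ∃ f, NewCopy (twoGluedCliques k) G u v f := by
  obtain ⟨g, hg0, hgm, hgi⟩ := exists_enum A u hu
  obtain ⟨h, hh0, hhm, hhi⟩ := exists_enum B v hv
  rw [hA] at hgm hgi
  rw [hB] at hhm hhi
  have hgh : ∀ i < k - 2, ∀ j < k - 2, g i ≠ h j := fun i hi j hj e =>
    Finset.disjoint_left.1 hAB (hgm i hi) (e ▸ hhm j hj)
  let F : ℕ → β := fun i =>
    if i = 0 then x else if i = 1 then y else if i < k then g (i - 2) else h (i - k)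
  have F0 : F 0 = x := rfl
  have F1 : F 1 = y := rfl
  have FA : ∀ i, 2 ≤ i → i < k → F i = g (i - 2) := by
    intro i h1 h2
    simp only [F, if_neg (show i ≠ 0 by omega), if_neg (show i ≠ 1 by omega), if_pos h2]
  have FB : ∀ i, k ≤ i → F i = h (i - k) := by
    intro i h1
    simp only [F, if_neg (show i ≠ 0 by omega), if_neg (show i ≠ 1 by omega),
      if_neg (show ¬ i < k by omega)]
  have hFA : ∀ i, 2 ≤ i → i < k → F i ∈ A := fun i h1 h2 => by
    rw [FA i h1 h2]; exact hgm _ (by omega)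
  have hFB : ∀ i, k ≤ i → i < 2 * k - 2 → F i ∈ B := fun i h1 h2 => by
    rw [FB i h1]; exact hhm _ (by omega)
  have hFi : ∀ i < 2 * k - 2, ∀ j < 2 * k - 2, i < j → F i ≠ F j := by
    intro i hi j hj hij
    obtain rfl | rfl | hj2 : j = 0 ∨ j = 1 ∨ 2 ≤ j := by omega
    · omega
    · obtain rfl : i = 0 := by omega
      exact hxy
    obtain hjk | hjk := lt_or_ge j k
    · have := hFA j hj2 hjk
      obtain rfl | rfl | hi2 : i = 0 ∨ i = 1 ∨ 2 ≤ i := by omega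
      · exact fun e => hxA (F0 ▸ e ▸ this)
      · exact fun e => hyA (F1 ▸ e ▸ this)
      · rw [FA i hi2 (by omega), FA j hj2 hjk]
        intro e
        have := hgi _ (by omega) _ (by omega) e
        omega
    · have := hFB j hjk hj
      obtain rfl | rfl | hi2 : i = 0 ∨ i = 1 ∨ 2 ≤ i := by omega
      · exact fun e => hxB (F0 ▸ e ▸ this)
      · exact fun e => hyB (F1 ▸ e ▸ this)
      · obtain hik | hik := lt_or_ge i k
        · exact fun e => Finset.disjoint_left.1 hAB (hFA i hi2 hik) (e ▸ this)
        · rw [FB i hik, FB j hjk]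
          intro e
          have := hhi _ (by omega) _ (by omega) e
          omega
  have hFi' : ∀ i < 2 * k - 2, ∀ j < 2 * k - 2, i ≠ j → F i ≠ F j := by
    intro i hi j hj hij
    rcases lt_or_gt_of_ne hij with h1 | h1
    · exact hFi i hi j hj h1
    · exact (hFi j hj i hi h1).symm
  have hmA : ∀ i < k, F i ∈ insert x (insert y (A : Set β)) := by
    intro i hi
    obtain rfl | rfl | hi2 : i = 0 ∨ i = 1 ∨ 2 ≤ i := by omega
    · simp [F0]
    · simp [F1]
    · exact Or.inr (Or.inr (hFA i hi2 hi))
  have hmB : ∀ i < 2 * k - 2, (i < 2 ∨ k ≤ i) → F i ∈ insert x (insert y (B : Set β)) := by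
    intro i hi hi'
    obtain rfl | rfl | hi2 : i = 0 ∨ i = 1 ∨ 2 ≤ i := by omega
    · simp [F0]
    · simp [F1]
    · exact Or.inr (Or.inr (hFB i (by omega) hi))
  have F2 : F 2 = u := by rw [FA 2 le_rfl (by omega)]; exact hg0
  have Fk : F k = v := by rw [FB k le_rfl, Nat.sub_self]; exact hh0
  refine ⟨fun i => F i.val, ?_, ?_, ⟨2, by omega⟩, ⟨k, by omega⟩, ?_, F2, Fk⟩
  · intro i j hij
    by_contra hne
    exact hFi' i i.2 j j.2 (fun e => hne (Fin.ext e)) hij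
  · intro a b hab
    rw [twoGluedCliques_adj] at hab
    obtain ⟨hne, h1 | h1 | h1 | h1⟩ := hab
    · exact Or.inl (hcA (hmA _ h1.1) (hmA _ h1.2) (hFi' _ a.2 _ b.2 hne))
    · exact Or.inl (hcB (hmB _ a.2 h1.1) (hmB _ b.2 h1.2) (hFi' _ a.2 _ b.2 hne))
    · right
      simp only [h1.1, h1.2, F2, Fk]
    · right
      simp only [h1.1, h1.2, F2, Fk, Sym2.eq_swap]
  · rw [twoGluedCliques_adj]
    exact ⟨by simp only [ne_eq]; omega, Or.inr (Or.inr (Or.inl ⟨rfl, rfl⟩))⟩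

/-- Two cliques of order at least `k` that share two vertices and together have enough vertices
for a copy of `H'_k` merge into one clique in a single step. -/
lemma isClique_union_bootStep {β : Type*} [Finite β] [DecidableEq β] {k : ℕ} (hk : 3 ≤ k)
    {G : SimpleGraph β} {A B : Finset β} (hcA : G.IsClique (A : Set β))
    (hcB : G.IsClique (B : Set β)) (hA : k ≤ A.card) (hB : k ≤ B.card)
    (hAB : 2 * k - 2 ≤ (A ∪ B).card) {x y : β} (hxy : x ≠ y)
    (hxA : x ∈ A) (hyA : y ∈ A) (hxB : x ∈ B) (hyB : y ∈ B) :
    (bootStep (twoGluedCliques k) G).IsClique ((A ∪ B : Finset β) : Set β) := by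
  have key : ∀ u ∈ A, u ∉ B → ∀ v ∈ B, v ∉ A →
      ∃ f, NewCopy (twoGluedCliques k) G u v f := by
    intro u huA huB v hvB hvA
    have hpair : ({x, y} : Finset β).card = 2 := Finset.card_pair hxy
    have hpA : ({x, y} : Finset β) ⊆ A := by
      intro z hz
      simp only [Finset.mem_insert, Finset.mem_singleton] at hz
      rcases hz with rfl | rfl <;> assumption
    have hpB : ({x, y} : Finset β) ⊆ B := by
      intro z hz
      simp only [Finset.mem_insert, Finset.mem_singleton] at hz
      rcases hz with rfl | rfl <;> assumption
    have hux : u ∉ ({x, y} : Finset β) := fun h => huB (hpB h)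
    have hvx : v ∉ ({x, y} : Finset β) := fun h => hvA (hpA h)
    have hcA' : (A \ {x, y}).card = A.card - 2 := by
      rw [Finset.card_sdiff_of_subset hpA, hpair]
    have hcB' : (B \ {x, y}).card = B.card - 2 := by
      rw [Finset.card_sdiff_of_subset hpB, hpair]
    -- Vertices of `A` outside `B` are used first, so that enough of `B` is left over.
    obtain ⟨A', hA'A, huA', hA'c, hleft⟩ : ∃ A' ⊆ A \ {x, y}, u ∈ A' ∧ A'.card = k - 2 ∧
        k - 2 ≤ ((B \ {x, y}) \ A').card := by
      by_cases hc : k - 2 ≤ (A \ B).card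
      · obtain ⟨A', h1, h2, h3⟩ := Finset.exists_subsuperset_card_eq
          (s := {u}) (t := A \ B) (n := k - 2) (by simp [huA, huB]) (by simp; omega) hc
        refine ⟨A', ?_, by simpa using h1, h3, ?_⟩
        · intro z hz
          have := Finset.mem_sdiff.1 (h2 hz)
          exact Finset.mem_sdiff.2 ⟨this.1, fun h => this.2 (hpB h)⟩
        · rw [Finset.sdiff_eq_self_of_disjoint, hcB']
          · omega
          · rw [Finset.disjoint_left]
            intro z hz hz'
            exact (Finset.mem_sdiff.1 (h2 hz')).2 (Finset.mem_sdiff.1 hz).1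
      · obtain ⟨A', h1, h2, h3⟩ := Finset.exists_subsuperset_card_eq
          (s := A \ B) (t := A \ {x, y}) (n := k - 2)
          (Finset.sdiff_subset_sdiff le_rfl hpB) (by omega) (by omega)
        refine ⟨A', h2, h1 (by simp [huA, huB]), h3, ?_⟩
        have hsub : (A ∪ B) ⊆ ((B \ {x, y}) \ A') ∪ (A' ∪ {x, y}) := by
          intro z hz
          have := @h1 z
          simp only [Finset.mem_union, Finset.mem_sdiff] at this hz ⊢
          tauto
        have h4 := Finset.card_le_card hsub
        have h5 := Finset.card_union_le ((B \ {x, y}) \ A') (A' ∪ {x, y})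
        have h6 := Finset.card_union_le A' {x, y}
        omega
    have hvA' : v ∉ A' := fun h => hvA (Finset.mem_sdiff.1 (hA'A h)).1
    obtain ⟨B', h1, h2, h3⟩ := Finset.exists_subsuperset_card_eq
      (s := {v}) (t := (B \ {x, y}) \ A') (n := k - 2)
      (by rw [Finset.singleton_subset_iff]; simp only [Finset.mem_sdiff]; tauto)
      (by simp; omega) hleft
    have hnA : ∀ z ∈ A', z ∈ A ∧ z ∉ ({x, y} : Finset β) := fun z hz =>
      Finset.mem_sdiff.1 (hA'A hz)
    have hnB : ∀ z ∈ B', (z ∈ B ∧ z ∉ ({x, y} : Finset β)) ∧ z ∉ A' := fun z hz => by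
      have := h2 hz
      simpa only [Finset.mem_sdiff] using this
    refine exists_newCopy_of_parts hk hxy (A := A') (B := B')
      (fun h => (hnA x h).2 (by simp)) (fun h => (hnA y h).2 (by simp))
      (fun h => (hnB x h).1.2 (by simp)) (fun h => (hnB y h).1.2 (by simp))
      (Finset.disjoint_left.2 fun z hz hz' => (hnB z hz').2 hz) hA'c h3 huA' (by simpa using h1)
      (hcA.subset ?_) (hcB.subset ?_)
    · rintro z (rfl | rfl | hz)
      exacts [hxA, hyA, (hnA z hz).1]
    · rintro z (rfl | rfl | hz)
      exacts [hxB, hyB, (hnB z hz).1.1]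
  intro u hu v hv huv
  rw [bootStep_adj]
  simp only [Finset.coe_union, Set.mem_union, Finset.mem_coe] at hu hv
  by_cases h1 : u ∈ A ∧ v ∈ A
  · exact Or.inl (hcA h1.1 h1.2 huv)
  by_cases h2 : u ∈ B ∧ v ∈ B
  · exact Or.inl (hcB h2.1 h2.2 huv)
  right
  by_cases h3 : u ∈ A
  · exact key u h3 (by tauto) v (by tauto) (by tauto)
  · obtain ⟨f, hf⟩ := key v (by tauto) (by tauto) u (by tauto) h3
    exact ⟨f, hf.symm⟩

/-! ### The upper bound -/

lemma isClique_range_bootStep {β : Type*} [Finite β] [DecidableEq β] {k : ℕ} (hk : 3 ≤ k)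
    {G : SimpleGraph β} {f : Fin (2 * k - 2) → β} (hf : Function.Injective f)
    (h : ∀ a b, (twoGluedCliques k).Adj a b → G.Adj (f a) (f b)) :
    (bootStep (twoGluedCliques k) G).IsClique ((Finset.univ.image f : Finset β) : Set β) := by
  set A : Finset (Fin (2 * k - 2)) := Finset.univ.filter fun i => i.val < k with hA
  set B : Finset (Fin (2 * k - 2)) := Finset.univ.filter fun i => i.val < 2 ∨ k ≤ i.val with hB
  have hU : A ∪ B = Finset.univ := by
    ext i
    simp only [hA, hB, Finset.mem_union, Finset.mem_filter, Finset.mem_univ, true_and, iff_true]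
    omega
  have hcA : k ≤ A.card := by
    have := Finset.card_le_card_of_injOn (s := (Finset.univ : Finset (Fin k))) (t := A)
      (fun i => (⟨i.val, by omega⟩ : Fin (2 * k - 2)))
      (fun i _ => by simp [hA]) (fun i _ j _ e => by simpa [Fin.ext_iff] using e)
    simpa using this
  have hcB : k ≤ B.card := by
    have := Finset.card_le_card_of_injOn (s := (Finset.univ : Finset (Fin k))) (t := B)
      (fun i => (⟨if i.val < 2 then i.val else i.val + (k - 2), by split <;> omega⟩ :
        Fin (2 * k - 2)))
      (fun i _ => by
        simp only [hB, Finset.coe_filter, Finset.mem_univ, true_and, Set.mem_ofPred_eq]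
        split <;> omega)
      (fun i _ j _ e => by
        simp only [Fin.mk.injEq] at e
        ext
        split at e <;> split at e <;> omega)
    simpa using this
  rw [← hU, Finset.image_union]
  refine isClique_union_bootStep hk ?_ ?_ ?_ ?_ ?_ (x := f ⟨0, by omega⟩) (y := f ⟨1, by omega⟩)
    (fun e => by simpa using hf e) ?_ ?_ ?_ ?_
  · intro x hx y hy hxy
    simp only [Finset.coe_image, Set.mem_image, Finset.mem_coe, hA, Finset.mem_filter,
      Finset.mem_univ, true_and] at hx hy
    obtain ⟨a, ha, rfl⟩ := hx
    obtain ⟨b, hb, rfl⟩ := hy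
    refine h a b ((twoGluedCliques_adj a b).2 ⟨fun e => hxy (by rw [Fin.ext e]), Or.inl ⟨ha, hb⟩⟩)
  · intro x hx y hy hxy
    simp only [Finset.coe_image, Set.mem_image, Finset.mem_coe, hB, Finset.mem_filter,
      Finset.mem_univ, true_and] at hx hy
    obtain ⟨a, ha, rfl⟩ := hx
    obtain ⟨b, hb, rfl⟩ := hy
    refine h a b ((twoGluedCliques_adj a b).2
      ⟨fun e => hxy (by rw [Fin.ext e]), Or.inr (Or.inl ⟨ha, hb⟩)⟩)
  · rwa [Finset.card_image_of_injective _ hf]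
  · rwa [Finset.card_image_of_injective _ hf]
  · rw [← Finset.image_union, Finset.card_image_of_injective _ hf, hU]
    simp
  all_goals
    refine Finset.mem_image_of_mem f ?_
    simp [hA, hB]
    try omega

/-- An edge that appears at time `i + 1` is the end of a chain of edges, one for each earlier
time, in which consecutive edges lie in a common new copy of `H'_k`. The set `Q j` is the union of
the first `j + 1` copies along the chain; it is a clique at time `j + 3`, but contains an edge
that was still missing at time `j`. -/
lemma exists_clique_chain {β : Type*} [Finite β] [DecidableEq β] {k : ℕ} (hk : 3 ≤ k)
    (G : SimpleGraph β) (i : ℕ) : ∀ u v : β,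
    (bootProcess (twoGluedCliques k) G (i + 1)).Adj u v →
    ¬ (bootProcess (twoGluedCliques k) G i).Adj u v →
    ∃ Q : ℕ → Finset β, (∀ j < i, Q j ⊆ Q (j + 1)) ∧
      (∀ j ≤ i, (bootProcess (twoGluedCliques k) G (j + 3)).IsClique (Q j : Set β) ∧
        2 * k - 2 ≤ (Q j).card ∧
        ∃ x ∈ Q j, ∃ y ∈ Q j, x ≠ y ∧ ¬ (bootProcess (twoGluedCliques k) G j).Adj x y) ∧
      u ∈ Q i ∧ v ∈ Q i := by
  set H := twoGluedCliques k
  have copy : ∀ (i : ℕ) (u v : β), (bootProcess H G (i + 1)).Adj u v →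
      ¬ (bootProcess H G i).Adj u v → ∃ f, NewCopy H (bootProcess H G i) u v f ∧
        (bootProcess H G (i + 2)).IsClique ((Finset.univ.image f : Finset β) : Set β) ∧
        (Finset.univ.image f).card = 2 * k - 2 ∧
        u ∈ Finset.univ.image f ∧ v ∈ Finset.univ.image f := by
    intro i u v h1 h0
    obtain ⟨f, hf⟩ := ((bootStep_adj H _ u v).1 h1).resolve_left h0
    refine ⟨f, hf, ?_, ?_, ?_, ?_⟩
    · refine isClique_range_bootStep hk hf.1 fun a b hab => ?_
      rcases hf.2.1 a b hab with h | h
      · exact bootProcess_mono H G (Nat.le_succ i) h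
      · rcases Sym2.eq_iff.1 h with ⟨e1, e2⟩ | ⟨e1, e2⟩
        · rw [e1, e2]; exact h1
        · rw [e1, e2]; exact h1.symm
    · rw [Finset.card_image_of_injective _ hf.1]; simp
    · obtain ⟨a, b, -, rfl, rfl⟩ := hf.2.2
      exact Finset.mem_image_of_mem f (Finset.mem_univ _)
    · obtain ⟨a, b, -, rfl, rfl⟩ := hf.2.2
      exact Finset.mem_image_of_mem f (Finset.mem_univ _)
  induction i with
  | zero =>
    intro u v h1 h0
    obtain ⟨f, hf, hc, hcard, hu, hv⟩ := copy 0 u v h1 h0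
    refine ⟨fun _ => Finset.univ.image f, by simp, ?_, hu, hv⟩
    intro j hj
    obtain rfl : j = 0 := by omega
    refine ⟨?_, hcard.ge, u, hu, v, hv, hf.ne, h0⟩
    exact fun x hx y hy hxy => bootProcess_mono H G (by omega) (hc hx hy hxy)
  | succ i ih =>
    intro u v h1 h0
    obtain ⟨f, hf, hc, hcard, hu, hv⟩ := copy (i + 1) u v h1 h0
    -- If the whole copy minus `uv` had been present one step earlier, then so would `uv`.
    obtain ⟨a, b, hab1, hab0⟩ : ∃ a b, (bootProcess H G (i + 1)).Adj (f a) (f b) ∧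
        ¬ (bootProcess H G i).Adj (f a) (f b) := by
      by_contra hno
      push Not at hno
      refine h0 ((bootStep_adj H _ u v).2 (Or.inr ⟨f, hf.1, fun a b hab => ?_, hf.2.2⟩))
      exact (hf.2.1 a b hab).imp_left (hno a b)
    obtain ⟨Q, hQmono, hQ, ha, hb⟩ := ih (f a) (f b) hab1 hab0
    have hPa : f a ∈ Finset.univ.image f := Finset.mem_image_of_mem f (Finset.mem_univ _)
    have hPb : f b ∈ Finset.univ.image f := Finset.mem_image_of_mem f (Finset.mem_univ _)
    refine ⟨fun j => if j ≤ i then Q j else Q i ∪ Finset.univ.image f, ?_, ?_, ?_, ?_⟩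
    · intro j hj
      rcases Nat.lt_succ_iff_lt_or_eq.1 hj with h | rfl
      · simp only [if_pos h.le, if_pos (Nat.succ_le_of_lt h)]
        exact hQmono j h
      · simp [Finset.subset_union_left]
    · intro j hj
      rcases Nat.le_succ_iff.1 hj with h | rfl
      · simp only [if_pos h]
        exact hQ j h
      · simp only [Nat.succ_eq_add_one, Nat.not_succ_le_self, if_false]
        have hle := Finset.card_le_card
          (Finset.subset_union_right (s₁ := Q i) (s₂ := Finset.univ.image f))
        refine ⟨?_, hcard.ge.trans hle, u, ?_, v, ?_, hf.ne, h0⟩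
        · have h2 := (hQ i le_rfl).2.1
          exact isClique_union_bootStep hk (hQ i le_rfl).1 hc (by omega) (by omega)
            (hcard.ge.trans hle) hab1.ne ha hb hPa hPb
        · exact Finset.mem_union_right _ hu
        · exact Finset.mem_union_right _ hv
    · simp only [Nat.not_succ_le_self, if_false]
      exact Finset.mem_union_right _ hu
    · simp only [Nat.not_succ_le_self, if_false]
      exact Finset.mem_union_right _ hv

lemma le_of_bootProcess_ne {k n : ℕ} (hk : 3 ≤ k) (G : SimpleGraph (Fin n)) (i : ℕ)
    (hne : bootProcess (twoGluedCliques k) G i ≠ bootProcess (twoGluedCliques k) G (i + 1)) :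
    i ≤ 3 * n + 2 := by
  have hle := bootProcess_mono (twoGluedCliques k) G (Nat.le_succ i)
  obtain ⟨u, v, h1, h0⟩ : ∃ u v, (bootProcess (twoGluedCliques k) G (i + 1)).Adj u v ∧
      ¬ (bootProcess (twoGluedCliques k) G i).Adj u v := by
    by_contra hno
    push Not at hno
    exact hne (le_antisymm hle hno)
  obtain ⟨Q, hmono, hQ, -, -⟩ := exists_clique_chain hk G i u v h1 h0
  have grow : ∀ j, 3 * j ≤ i → j ≤ (Q (3 * j)).card := by
    intro j
    induction j with
    | zero => intro; exact Nat.zero_le _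
    | succ j ih =>
      intro hj
      have hsub : Q (3 * j) ⊆ Q (3 * j + 3) :=
        ((hmono (3 * j) (by omega)).trans (hmono (3 * j + 1) (by omega))).trans
          (hmono (3 * j + 2) (by omega))
      have hss : Q (3 * j) ⊂ Q (3 * j + 3) := by
        refine hsub.ssubset_of_ne fun e => ?_
        obtain ⟨x, hx, y, hy, hxy, hnot⟩ := (hQ (3 * j + 3) (by omega)).2.2
        rw [← e] at hx hy
        exact hnot ((hQ (3 * j) (by omega)).1 hx hy hxy)
      have h2 := Finset.card_lt_card hss
      have h3 := ih (by omega)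
      have : 3 * (j + 1) = 3 * j + 3 := by ring
      rw [this]
      omega
  have h1 := grow (i / 3) (by omega)
  have h2 := Finset.card_le_univ (Q (3 * (i / 3)))
  rw [Fintype.card_fin] at h2
  omega

lemma bootProcess_stable {k n : ℕ} (hk : 3 ≤ k) (G : SimpleGraph (Fin n)) :
    3 * n + 3 ∈ {t | bootProcess (twoGluedCliques k) G t =
      bootProcess (twoGluedCliques k) G (t + 1)} := by
  by_contra h
  have := le_of_bootProcess_ne hk G _ h
  omega

lemma runningTime_le {k n : ℕ} (hk : 3 ≤ k) (G : SimpleGraph (Fin n)) :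
    runningTime (twoGluedCliques k) G ≤ 3 * n + 3 :=
  Nat.sInf_le (bootProcess_stable hk G)

lemma maxRunningTime_le {k : ℕ} (hk : 3 ≤ k) (n : ℕ) :
    maxRunningTime (twoGluedCliques k) n ≤ 3 * n + 3 := by
  refine csSup_le ⟨_, ⊥, rfl⟩ ?_
  rintro t ⟨G, rfl⟩
  exact runningTime_le hk G

lemma runningTime_le_maxRunningTime {k n : ℕ} (hk : 3 ≤ k) (G : SimpleGraph (Fin n)) :
    runningTime (twoGluedCliques k) G ≤ maxRunningTime (twoGluedCliques k) n := by
  refine le_csSup ⟨3 * n + 3, ?_⟩ ⟨G, rfl⟩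
  rintro t ⟨G, rfl⟩
  exact runningTime_le hk G

/-! ### Triangle-connectivity of `H'_k` minus an edge -/

/-- In `K₄` minus (at most) one edge `e`, a function on edges that is constant on triangles is
constant. -/
lemma k4_const {N : Type*} (e : Sym2 N) (c : Sym2 N → ℕ) {p q r w : N}
    (h12 : p ≠ q) (h13 : p ≠ r) (h14 : p ≠ w) (h23 : q ≠ r) (h24 : q ≠ w) (h34 : r ≠ w)
    (T : ∀ i j l, i ∈ ({p, q, r, w} : Set N) → j ∈ ({p, q, r, w} : Set N) →
      l ∈ ({p, q, r, w} : Set N) → i ≠ j → j ≠ l → i ≠ l → s(i, j) ≠ e → s(j, l) ≠ e →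
      s(i, l) ≠ e → c s(i, j) = c s(j, l) ∧ c s(i, j) = c s(i, l)) :
    ∃ m, (s(p, q) ≠ e → c s(p, q) = m) ∧ (s(p, r) ≠ e → c s(p, r) = m) ∧
      (s(q, r) ≠ e → c s(q, r) = m) ∧ (s(p, w) ≠ e → c s(p, w) = m) ∧
      (s(q, w) ≠ e → c s(q, w) = m) ∧ (s(r, w) ≠ e → c s(r, w) = m) := by
  have t1 := T p q r (by simp) (by simp) (by simp) h12 h23 h13
  have t2 := T p q w (by simp) (by simp) (by simp) h12 h24 h14
  have t3 := T p r w (by simp) (by simp) (by simp) h13 h34 h14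
  have t4 := T q r w (by simp) (by simp) (by simp) h23 h34 h24
  clear T
  have n1 : s(p, q) ≠ s(p, r) := by simp [h23, h12.symm, h13]
  have n2 : s(p, q) ≠ s(p, w) := by simp [h24, h12.symm, h14]
  have n3 : s(p, q) ≠ s(q, r) := by simp [h12, h13]
  have n4 : s(p, q) ≠ s(q, w) := by simp [h12, h14]
  have n5 : s(p, q) ≠ s(r, w) := by simp [h13, h14]
  have n6 : s(p, r) ≠ s(p, w) := by simp [h34, h14]
  have n7 : s(p, r) ≠ s(q, r) := by simp [h12, h13]
  have n8 : s(p, r) ≠ s(q, w) := by simp [h12, h14]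
  have n9 : s(p, r) ≠ s(r, w) := by simp [h13, h14]
  have n10 : s(p, w) ≠ s(q, r) := by simp [h12, h13]
  have n11 : s(p, w) ≠ s(q, w) := by simp [h12, h14]
  have n12 : s(p, w) ≠ s(r, w) := by simp [h13, h14]
  have n13 : s(q, r) ≠ s(q, w) := by simp [h34, h24]
  have n14 : s(q, r) ≠ s(r, w) := by simp [h23, h24]
  have n15 : s(q, w) ≠ s(r, w) := by simp [h23, h24]
  by_cases e1 : s(p, q) = e
  · exact ⟨c s(r, w), by grind⟩
  by_cases e2 : s(p, r) = e
  · exact ⟨c s(p, q), by grind⟩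
  by_cases e3 : s(q, r) = e
  · exact ⟨c s(p, q), by grind⟩
  exact ⟨c s(p, q), by grind⟩

/-- Deleting any one edge `e` from `H'_k` leaves a graph in which any two edges are linked by a
sequence of triangles: a function on edges that is constant on triangles is constant. -/
lemma twoGluedCliques_edge_const {k : ℕ} (hk : 3 ≤ k) (e : Sym2 (Fin (2 * k - 2)))
    (c : Sym2 (Fin (2 * k - 2)) → ℕ)
    (T : ∀ i j l, (twoGluedCliques k).Adj i j → (twoGluedCliques k).Adj j l →
      (twoGluedCliques k).Adj i l → s(i, j) ≠ e → s(j, l) ≠ e →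
      s(i, l) ≠ e → c s(i, j) = c s(j, l) ∧ c s(i, j) = c s(i, l)) :
    ∃ m, ∀ i j, (twoGluedCliques k).Adj i j → s(i, j) ≠ e → c s(i, j) = m := by
  set H := twoGluedCliques k with hH
  let z : Fin (2 * k - 2) := ⟨0, by omega⟩
  let o : Fin (2 * k - 2) := ⟨1, by omega⟩
  let a : Fin (2 * k - 2) := ⟨2, by omega⟩
  let b : Fin (2 * k - 2) := ⟨k, by omega⟩
  have hz : ∀ i, 0 < i.val → H.Adj z i := by
    intro i hi
    simp only [hH, twoGluedCliques_adj, z]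
    omega
  have ho : ∀ i, 1 < i.val → H.Adj o i := by
    intro i hi
    simp only [hH, twoGluedCliques_adj, o]
    omega
  have hzo : H.Adj z o := hz o Nat.one_pos
  have K4 : ∀ p q r w, H.Adj p q → H.Adj p r → H.Adj p w → H.Adj q r → H.Adj q w → H.Adj r w →
      ∃ m, (s(p, q) ≠ e → c s(p, q) = m) ∧ (s(p, r) ≠ e → c s(p, r) = m) ∧
      (s(q, r) ≠ e → c s(q, r) = m) ∧ (s(p, w) ≠ e → c s(p, w) = m) ∧
      (s(q, w) ≠ e → c s(q, w) = m) ∧ (s(r, w) ≠ e → c s(r, w) = m) := by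
    intro p q r w h12 h13 h14 h23 h24 h34
    have hcl : H.IsClique ({p, q, r, w} : Set (Fin (2 * k - 2))) := by
      rw [SimpleGraph.isClique_iff]
      intro x hx y hy hxy
      simp only [Set.mem_insert_iff, Set.mem_singleton_iff] at hx hy
      rcases hx with rfl | rfl | rfl | rfl <;> rcases hy with rfl | rfl | rfl | rfl <;>
        first
        | exact absurd rfl hxy
        | assumption
        | (apply SimpleGraph.Adj.symm; assumption)
    exact k4_const e c h12.ne h13.ne h14.ne h23.ne h24.ne h34.ne
      fun i j l hi hj hl hij hjl hil => T i j l (hcl hi hj hij) (hcl hj hl hjl) (hcl hi hl hil)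
  have hab : H.Adj a b := by
    rw [hH, twoGluedCliques_adj]
    exact ⟨by simp only [a, b]; omega, Or.inr (Or.inr (Or.inl ⟨rfl, rfl⟩))⟩
  obtain ⟨m, hm1, hm2, hm3, -⟩ := K4 z o a b hzo (hz _ (by simp [a])) (hz _ (by simp [b]; omega))
    (ho _ (by simp [a])) (ho _ (by simp [b]; omega)) hab
  -- At least two edges of the triangle `z o x` survive, which carries the value `m` over to the
  -- whole of `{z, o, x, y}`.
  have ext : ∀ x y, 2 ≤ x.val → 2 ≤ y.val → H.Adj x y →
      (s(z, o) ≠ e → c s(z, o) = m) ∧ (s(z, x) ≠ e → c s(z, x) = m) ∧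
        (s(o, x) ≠ e → c s(o, x) = m) →
      ((s(z, o) ≠ e → c s(z, o) = m) ∧ (s(z, y) ≠ e → c s(z, y) = m) ∧
        (s(o, y) ≠ e → c s(o, y) = m)) ∧ (s(x, y) ≠ e → c s(x, y) = m) := by
    intro x y hx hy hxy h
    obtain ⟨m', h'⟩ := K4 z o x y hzo (hz _ (by omega)) (hz _ (by omega)) (ho _ (by omega))
      (ho _ (by omega)) hxy
    have n : s(z, x) ≠ s(o, x) := by
      have h1 := hzo.ne
      have h2 := (hz x (by omega)).ne
      simp [h1, h2]
    have hmm : m' = m := by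
      by_cases h1 : s(z, x) = e
      · have h2 : s(o, x) ≠ e := fun h2 => n (h1.trans h2.symm)
        rw [← h.2.2 h2, ← h'.2.2.1 h2]
      · rw [← h.2.1 h1, ← h'.2.1 h1]
    subst hmm
    exact ⟨⟨h.1, h'.2.2.2.1, h'.2.2.2.2.1⟩, h'.2.2.2.2.2⟩
  have base : (s(z, o) ≠ e → c s(z, o) = m) ∧ (s(z, a) ≠ e → c s(z, a) = m) ∧
      (s(o, a) ≠ e → c s(o, a) = m) := ⟨hm1, hm2, hm3⟩
  have baseb := (ext a b (by simp [a]) (by simp [b]; omega) hab base).1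
  have all : ∀ x, 2 ≤ x.val → (s(z, o) ≠ e → c s(z, o) = m) ∧ (s(z, x) ≠ e → c s(z, x) = m) ∧
      (s(o, x) ≠ e → c s(o, x) = m) := by
    intro x hx
    by_cases hxa : x = a
    · exact hxa ▸ base
    by_cases hxb : x = b
    · exact hxb ▸ baseb
    have hxa' : x.val ≠ 2 := fun h => hxa (Fin.ext h)
    have hxb' : x.val ≠ k := fun h => hxb (Fin.ext h)
    rcases lt_or_ge x.val k with h | h
    · refine (ext a x (by simp [a]) hx ?_ base).1
      simp only [hH, twoGluedCliques_adj, a]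
      omega
    · refine (ext b x (by simp [b]; omega) hx ?_ baseb).1
      simp only [hH, twoGluedCliques_adj, b]
      exact ⟨hxb'.symm, Or.inr (Or.inl ⟨Or.inr le_rfl, Or.inr h⟩)⟩
  have ordered : ∀ i j, i.val < j.val → H.Adj i j → s(i, j) ≠ e → c s(i, j) = m := by
    intro i j hlt hij he
    obtain hi | hi | hi : i.val = 0 ∨ i.val = 1 ∨ 2 ≤ i.val := by omega
    · obtain rfl : i = z := Fin.ext hi
      obtain hj | hj : j.val = 1 ∨ 2 ≤ j.val := by omega
      · obtain rfl : j = o := Fin.ext hj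
        exact base.1 he
      · exact (all j hj).2.1 he
    · obtain rfl : i = o := Fin.ext hi
      exact (all j (by omega)).2.2 he
    · exact (ext i j hi (by omega) hij (all i hi)).2 he
  refine ⟨m, fun i j hij he => ?_⟩
  rcases lt_or_gt_of_ne ((twoGluedCliques_adj i j).1 hij).1 with h | h
  · exact ordered i j h hij he
  · rw [Sym2.eq_swap] at he ⊢
    exact ordered j i h hij.symm he

lemma twoGluedCliques_exists_good {k : ℕ} (hk : 3 ≤ k) (e : Sym2 (Fin (2 * k - 2)))
    (i : Fin (2 * k - 2)) : ∃ j, (twoGluedCliques k).Adj i j ∧ s(i, j) ≠ e := by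
  obtain ⟨p, q, hp, hq, hpq⟩ : ∃ p q, (twoGluedCliques k).Adj i p ∧
      (twoGluedCliques k).Adj i q ∧ p ≠ q := by
    simp only [twoGluedCliques_adj, ne_eq, Fin.ext_iff]
    obtain hi | hi | hi : i.val = 0 ∨ i.val = 1 ∨ 2 ≤ i.val := by omega
    · exact ⟨⟨1, by omega⟩, ⟨2, by omega⟩, by dsimp only; omega, by dsimp only; omega, by simp⟩
    · exact ⟨⟨0, by omega⟩, ⟨2, by omega⟩, by dsimp only; omega, by dsimp only; omega, by simp⟩
    · exact ⟨⟨0, by omega⟩, ⟨1, by omega⟩, by dsimp only; omega, by dsimp only; omega, by simp⟩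
  by_cases h : s(i, p) = e
  · refine ⟨q, hq, fun h' => hpq ?_⟩
    have := h.trans h'.symm
    exact Sym2.congr_right.1 this
  · exact ⟨p, hp, h⟩

/-! ### The lower bound -/

/-- Vertices are arranged in blocks of `d = k - 2` consecutive numbers. The first four blocks form
level `0` (by truncated subtraction); every later block is a level of its own. -/
def level (d v : ℕ) : ℕ := v / d - 3

/-- `Attached d u v`: the vertex `v` lies in the block `P_j`, of order at most `k`, belonging to
the level `j > 0` of `u`. This block consists of level `j`, the first vertex `(j + 2) * d` of level `j - 1`,
and the vertex `0` or `1` of level `0`, according to the parity of `j`. -/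
def Attached (d u v : ℕ) : Prop :=
  0 < level d u ∧ (level d v = level d u ∨ v = (level d u + 2) * d ∨ v = level d u % 2)

/-- The graph at time `t` of the slow process: levels `0, …, t` form a clique, and every vertex of
positive level is joined to the other vertices of its block. The two vertices of a block
that lie in lower levels are thus not joined to each other unless they lie in the clique. -/
def towerGraph (d n t : ℕ) : SimpleGraph (Fin n) where
  Adj u v := u ≠ v ∧ ((level d u ≤ t ∧ level d v ≤ t) ∨ Attached d u v ∨ Attached d v u)
  symm := ⟨fun u v h => ⟨h.1.symm, by tauto⟩⟩
  loopless := ⟨fun u h => h.1 rfl⟩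

lemma level_first {d : ℕ} (hd : 1 ≤ d) (j : ℕ) : level d ((j + 2) * d) = j - 1 := by
  rw [level, Nat.mul_div_cancel _ hd]
  omega

lemma level_of_lt_two {d v : ℕ} (hv : v ≤ 2) : level d v = 0 := by
  have : v / d ≤ v := Nat.div_le_self v d
  unfold level
  omega

lemma Attached.level_le {d u v : ℕ} (hd : 1 ≤ d) (h : Attached d u v) : level d v ≤ level d u := by
  obtain ⟨h0, h1 | h1 | h1⟩ := h
  · exact h1.le
  · have := level_first hd (level d u)
    rw [← h1] at this
    omega
  · rw [level_of_lt_two (d := d) (v := v) (by omega)]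
    exact Nat.zero_le _

/-- In a triangle of the graph at time `t`, no vertex above level `t + 1` is strictly above the
other two. -/
lemma towerGraph_no_peak {d n t : ℕ} (hd : 1 ≤ d) {u v w : Fin n}
    (huv : (towerGraph d n t).Adj u v) (huw : (towerGraph d n t).Adj u w)
    (hvw : (towerGraph d n t).Adj v w) (ht : t + 2 ≤ level d u) :
    level d u ≤ level d v ∨ level d u ≤ level d w := by
  by_contra! hlt
  have att : ∀ x : Fin n, (towerGraph d n t).Adj u x → level d x < level d u →
      x.val = (level d u + 2) * d ∨ x.val = level d u % 2 := by
    intro x hx hlx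
    obtain ⟨-, h | h | h⟩ := hx
    · omega
    · exact h.2.resolve_left hlx.ne
    · have := h.level_le hd
      omega
  have core : ∀ x y : Fin n, (towerGraph d n t).Adj x y → x.val = (level d u + 2) * d →
      y.val = level d u % 2 → False := by
    intro x y hxy hx hy
    have hlx := level_first hd (level d u)
    rw [← hx] at hlx
    have hly : level d y = 0 := level_of_lt_two (by omega)
    obtain ⟨-, h | h | h⟩ := hxy
    · omega
    · obtain ⟨-, h | h | h⟩ := h
      · omega
      · have : 2 * 1 ≤ (level d x + 2) * d := Nat.mul_le_mul (by omega) hd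
        omega
      · omega
    · have := h.1
      omega
  rcases att v huv hlt.1 with h1 | h1 <;> rcases att w huw hlt.2 with h2 | h2
  · exact hvw.ne (Fin.ext (h1.trans h2.symm))
  · exact core v w hvw h1 h2
  · exact core w v hvw.symm h2 h1
  · exact hvw.ne (Fin.ext (h1.trans h2.symm))

lemma card_level_le {d n j : ℕ} (hd : 1 ≤ d) (hj : 0 < j) :
    (Finset.univ.filter fun v : Fin n => level d v = j).card ≤ d := by
  have h := Finset.card_le_card_of_injOn
    (s := Finset.univ.filter fun v : Fin n => level d v = j)
    (t := Finset.Ico ((j + 3) * d) ((j + 4) * d)) (fun v => v.val)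
    (fun v hv => by
      have hv' : v.val / d - 3 = j := (Finset.mem_filter.1 (Finset.mem_coe.1 hv)).2
      have h1 : v.val / d = j + 3 := by omega
      simp only [Finset.coe_Ico, Set.mem_Ico]
      refine ⟨?_, (Nat.div_lt_iff_lt_mul hd).1 (by omega)⟩
      exact (Nat.le_div_iff_mul_le hd).1 h1.ge)
    (fun u _ v _ h => Fin.ext h)
  rw [Nat.card_Ico, ← Nat.sub_mul] at h
  have : j + 4 - (j + 3) = 1 := by omega
  rw [this, one_mul] at h
  exact h

/-- The levels of the vertices of a new copy of `H'_k`: all edges of the copy except possibly `uv`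
have the same top level, where levels up to `t + 1` count as one. If this top level
exceeds `t + 1`, then the `2k - 2` vertices of the copy lie in a single block of order at most
`k`. -/
lemma bootStep_towerGraph_le {d n t : ℕ} (hd : 1 ≤ d) :
    bootStep (twoGluedCliques (d + 2)) (towerGraph d n t) ≤ towerGraph d n (t + 1) := by
  intro u v huv
  rw [bootStep_adj] at huv
  rcases huv with huv | ⟨f, hf⟩
  · refine ⟨huv.1, ?_⟩
    rcases huv.2 with h | h
    · left; omega
    · exact Or.inr h
  have hne := hf.ne
  obtain ⟨hinj, hadj, a, b, hab, rfl, rfl⟩ := hf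
  set l : Fin (2 * (d + 2) - 2) → ℕ := fun i => max (level d (f i)) (t + 1) with hl
  have good : ∀ i j, (twoGluedCliques (d + 2)).Adj i j → s(i, j) ≠ s(a, b) →
      (towerGraph d n t).Adj (f i) (f j) := by
    intro i j hij he
    refine (hadj i j hij).resolve_right fun h => he ?_
    have : Sym2.map f s(i, j) = Sym2.map f s(a, b) := h
    exact Sym2.map.injective hinj this
  obtain ⟨m, hm⟩ := twoGluedCliques_edge_const (by omega) s(a, b)
    (Sym2.lift ⟨fun i j => max (l i) (l j), fun i j => max_comm _ _⟩) (by
      intro i j r hij hjr hir h1 h2 h3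
      have g1 := good i j hij h1
      have g2 := good j r hjr h2
      have g3 := good i r hir h3
      have p1 := towerGraph_no_peak hd g1 g3 g2
      have p2 := towerGraph_no_peak hd g1.symm g2 g3
      have p3 := towerGraph_no_peak hd g3.symm g2.symm g1
      simp only [Sym2.lift_mk, hl]
      omega)
  simp only [Sym2.lift_mk] at hm
  refine ⟨hne, Or.inl ?_⟩
  by_cases hmt : m ≤ t + 1
  · have low : ∀ i, level d (f i) ≤ t + 1 := by
      intro i
      obtain ⟨j, hij, he⟩ := twoGluedCliques_exists_good (by omega) s(a, b) i
      have := hm i j hij he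
      simp only [hl] at this
      omega
    exact ⟨low a, low b⟩
  · exfalso
    have inBlock : ∀ i, level d (f i) = m ∨ (f i).val = (m + 2) * d ∨ (f i).val = m % 2 := by
      intro i
      obtain ⟨j, hij, he⟩ := twoGluedCliques_exists_good (by omega) s(a, b) i
      have h1 := hm i j hij he
      simp only [hl] at h1
      by_cases h2 : level d (f i) = m
      · exact Or.inl h2
      have h3 : level d (f j) = m := by omega
      obtain ⟨-, h | h | h⟩ := good i j hij he
      · omega
      · have := h.level_le hd
        omega
      · have := h.2
        rwa [h3] at this
    have hcard : (Finset.univ.image fun i => (f i)).card = 2 * (d + 2) - 2 := by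
      rw [Finset.card_image_of_injective _ hinj]; simp
    have hsub : (Finset.univ.image fun i => f i) ⊆
        (Finset.univ.filter fun v : Fin n => level d v = m) ∪
          ((Finset.univ.filter fun v : Fin n => v.val = (m + 2) * d) ∪
            (Finset.univ.filter fun v : Fin n => v.val = m % 2)) := by
      intro x hx
      obtain ⟨i, -, rfl⟩ := Finset.mem_image.1 hx
      simpa using inBlock i
    have single : ∀ y, (Finset.univ.filter fun v : Fin n => v.val = y).card ≤ 1 := by
      intro y
      rw [Finset.card_le_one]
      intro v hv w hw
      simp only [Finset.mem_filter, Finset.mem_univ, true_and] at hv hw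
      exact Fin.ext (hv.trans hw.symm)
    have h1 := Finset.card_le_card hsub
    have h2 := Finset.card_union_le (Finset.univ.filter fun v : Fin n => level d v = m)
      ((Finset.univ.filter fun v : Fin n => v.val = (m + 2) * d) ∪
            (Finset.univ.filter fun v : Fin n => v.val = m % 2))
    have h3 := Finset.card_union_le (Finset.univ.filter fun v : Fin n => v.val = (m + 2) * d)
            (Finset.univ.filter fun v : Fin n => v.val = m % 2)
    have h4 := card_level_le (n := n) hd (j := m) (by omega)
    have h5 := single ((m + 2) * d)
    have h6 := single (m % 2)
    omega

/-- The next level merges with the clique in one step. -/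
lemma towerGraph_le_bootStep {d n t : ℕ} (hd : 1 ≤ d) (hn : (t + 5) * d ≤ n) :
    towerGraph d n (t + 1) ≤ bootStep (twoGluedCliques (d + 2)) (towerGraph d n t) := by
  set L : Finset (Fin n) := Finset.univ.filter fun v => level d v = t + 1 with hL
  set A : Finset (Fin n) := Finset.univ.filter fun v => level d v ≤ t with hA
  have hbig : 5 * d ≤ (t + 5) * d := Nat.mul_le_mul (by omega) le_rfl
  have e4 : (t + 5) * d = (t + 4) * d + d := by ring
  have e3 : (t + 4) * d = (t + 3) * d + d := by ring
  have e33 : 3 * d ≤ (t + 3) * d := Nat.mul_le_mul (by omega) le_rfl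
  let x : Fin n := ⟨(t + 3) * d, by omega⟩
  let y : Fin n := ⟨(t + 1) % 2, by omega⟩
  have hlx : level d x = t := by
    have := level_first hd (t + 1)
    exact this
  have hly : level d y = 0 := level_of_lt_two (by simp only [y]; omega)
  have hxy : x ≠ y := by
    intro e
    have : (t + 3) * d = (t + 1) % 2 := congrArg Fin.val e
    omega
  have hLcard : d ≤ L.card := by
    have h := Finset.card_le_card_of_injOn (s := (Finset.univ : Finset (Fin d))) (t := L)
      (fun i => (⟨(t + 4) * d + i.val, by omega⟩ : Fin n))
      (fun i _ => by
        simp only [hL, Finset.coe_filter, Finset.mem_univ, true_and]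
        show level d ((t + 4) * d + i.val) = t + 1
        have : ((t + 4) * d + i.val) / d = t + 4 := by
          rw [Nat.add_comm, Nat.add_mul_div_right _ _ hd, Nat.div_eq_of_lt i.2, zero_add]
        rw [level, this]
        rfl)
      (fun i _ j _ e => by
        simp only [Fin.mk.injEq] at e
        exact Fin.ext (by omega))
    simpa using h
  have hAcard : d + 2 ≤ A.card := by
    have h := Finset.card_le_card_of_injOn (s := (Finset.univ : Finset (Fin (d + 2)))) (t := A)
      (fun i => (⟨i.val, by omega⟩ : Fin n))
      (fun i _ => by
        simp only [hA, Finset.coe_filter, Finset.mem_univ, true_and]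
        show level d i.val ≤ t
        have : i.val / d < 4 := (Nat.div_lt_iff_lt_mul hd).2 (by omega)
        unfold level
        omega)
      (fun i _ j _ e => by
        simp only [Fin.mk.injEq] at e
        exact Fin.ext e)
    simpa using h
  have hAL : Disjoint A L := by
    rw [Finset.disjoint_left]
    intro v hv hv'
    simp only [hA, hL, Finset.mem_filter, Finset.mem_univ, true_and] at hv hv'
    omega
  have hxA : x ∈ A := by simp [hA, hlx]
  have hyA : y ∈ A := by simp [hA, hly]
  have hxyL : ({x, y} : Finset (Fin n)).card = 2 := Finset.card_pair hxy
  have hdisj : Disjoint L {x, y} := by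
    rw [Finset.disjoint_left]
    intro v hv hv'
    simp only [Finset.mem_insert, Finset.mem_singleton] at hv'
    rcases hv' with rfl | rfl
    · exact Finset.disjoint_left.1 hAL hxA hv
    · exact Finset.disjoint_left.1 hAL hyA hv
  have hcl := isClique_union_bootStep (k := d + 2) (by omega) (G := towerGraph d n t)
    (A := A) (B := L ∪ {x, y}) (x := x) (y := y) ?_ ?_ hAcard ?_ ?_ hxy hxA hyA (by simp) (by simp)
  · intro u v huv
    by_cases h : level d u ≤ t + 1 ∧ level d v ≤ t + 1
    · have mem : ∀ w : Fin n, level d w ≤ t + 1 →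
          w ∈ ((A ∪ (L ∪ {x, y}) : Finset (Fin n)) : Set (Fin n)) := by
        intro w hw
        rw [Finset.mem_coe, Finset.mem_union, Finset.mem_union]
        simp only [hA, hL, Finset.mem_filter, Finset.mem_univ, true_and]
        omega
      exact hcl (mem u h.1) (mem v h.2) huv.1
    · exact le_bootStep _ _ ⟨huv.1, Or.inr (huv.2.resolve_left h)⟩
  · intro u hu v hv huv
    simp only [hA, Finset.coe_filter, Finset.mem_univ, true_and] at hu hv
    exact ⟨huv, Or.inl ⟨hu, hv⟩⟩
  · have fromL : ∀ u v : Fin n, u ∈ L → v ∈ L ∪ {x, y} → u ≠ v →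
        (towerGraph d n t).Adj u v := by
      intro u v hu hv huv
      simp only [hL, Finset.mem_union, Finset.mem_filter, Finset.mem_univ, true_and,
        Finset.mem_insert, Finset.mem_singleton] at hu hv
      refine ⟨huv, Or.inr (Or.inl ⟨by omega, ?_⟩)⟩
      rw [hu]
      rcases hv with h | rfl | rfl
      · exact Or.inl h
      · exact Or.inr (Or.inl rfl)
      · exact Or.inr (Or.inr rfl)
    intro u hu v hv huv
    rw [Finset.mem_coe] at hu hv
    by_cases h1 : u ∈ L
    · exact fromL u v h1 hv huv
    by_cases h2 : v ∈ L
    · exact (fromL v u h2 hu huv.symm).symm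
    have low : ∀ w ∈ L ∪ {x, y}, w ∉ L → level d w ≤ t := by
      intro w hw hw'
      have := (Finset.mem_union.1 hw).resolve_left hw'
      simp only [Finset.mem_insert, Finset.mem_singleton] at this
      rcases this with rfl | rfl
      · exact hlx.le
      · omega
    exact ⟨huv, Or.inl ⟨low u hu h1, low v hv h2⟩⟩
  · rw [Finset.card_union_of_disjoint hdisj, hxyL]
    omega
  · have := Finset.card_le_card
      (Finset.union_subset_union (le_refl A) (Finset.subset_union_left (s₁ := L) (s₂ := {x, y})))
    rw [Finset.card_union_of_disjoint hAL] at this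
    omega

lemma towerGraph_ne_succ {d n t : ℕ} (hd : 1 ≤ d) (hn : (t + 5) * d ≤ n) :
    towerGraph d n t ≠ towerGraph d n (t + 1) := by
  have e4 : (t + 5) * d = (t + 4) * d + d := by ring
  have e3 : (t + 4) * d = (t + 3) * d + d := by ring
  have e33 : 3 * d ≤ (t + 3) * d := Nat.mul_le_mul (by omega) le_rfl
  let u : Fin n := ⟨(t + 4) * d, by omega⟩
  let w : Fin n := ⟨2, by omega⟩
  have hlu : level d u = t + 1 := level_first hd (t + 2)
  have hlw : level d w = 0 := level_of_lt_two le_rfl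
  have huw : u ≠ w := fun e => by
    have : (t + 4) * d = 2 := congrArg Fin.val e
    omega
  intro e
  have h1 : (towerGraph d n (t + 1)).Adj u w := ⟨huw, Or.inl ⟨by omega, by omega⟩⟩
  rw [← e] at h1
  obtain ⟨-, h | h | h⟩ := h1
  · omega
  · obtain ⟨-, h | h | h⟩ := h
    · omega
    · rw [hlu] at h
      have h' : 2 = (t + 1 + 2) * d := h
      have : (t + 1 + 2) * d = (t + 3) * d := by ring
      omega
    · have h' : 2 = level d u % 2 := h
      omega
  · have := h.1
    omega

lemma bootProcess_towerGraph {d n : ℕ} (hd : 1 ≤ d) (t : ℕ) (hn : (t + 4) * d ≤ n) :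
    bootProcess (twoGluedCliques (d + 2)) (towerGraph d n 0) t = towerGraph d n t := by
  induction t with
  | zero => rfl
  | succ t ih =>
    have hn' : (t + 5) * d ≤ n := by
      have : t + 1 + 4 = t + 5 := by ring
      rwa [this] at hn
    have hle : (t + 4) * d ≤ (t + 5) * d := Nat.mul_le_mul (by omega) le_rfl
    rw [bootProcess, ih (hle.trans hn')]
    exact le_antisymm (bootStep_towerGraph_le hd) (towerGraph_le_bootStep hd hn')

lemma le_runningTime_towerGraph {d n T : ℕ} (hd : 1 ≤ d) (hn : (T + 4) * d ≤ n) :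
    T ≤ runningTime (twoGluedCliques (d + 2)) (towerGraph d n 0) := by
  have hmem := Nat.sInf_mem ⟨_, bootProcess_stable (k := d + 2) (by omega) (towerGraph d n 0)⟩
  by_contra! hlt
  change bootProcess _ _ (runningTime (twoGluedCliques (d + 2)) (towerGraph d n 0)) =
    bootProcess _ _ (runningTime (twoGluedCliques (d + 2)) (towerGraph d n 0) + 1) at hmem
  set t := runningTime (twoGluedCliques (d + 2)) (towerGraph d n 0)
  have h1 : (t + 5) * d ≤ n := (Nat.mul_le_mul (by omega) le_rfl).trans hn
  have h2 : (t + 4) * d ≤ n := (Nat.mul_le_mul (by omega) le_rfl).trans hn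
  rw [bootProcess_towerGraph hd t h2, bootProcess_towerGraph hd (t + 1) h1] at hmem
  exact towerGraph_ne_succ hd h1 hmem

/-- For `k ≥ 3`, the graph `H'_k` satisfies `M_{H'_k}(n) = Θ(n)`. -/
theorem maxRunningTime_twoGluedCliques_theta (k : ℕ) (hk : 3 ≤ k) :
    ∃ c₁ c₂ : ℝ, 0 < c₁ ∧ 0 < c₂ ∧ ∃ n₀ : ℕ, ∀ n : ℕ, n₀ ≤ n →
      c₁ * n ≤ (maxRunningTime (twoGluedCliques k) n : ℝ) ∧
      (maxRunningTime (twoGluedCliques k) n : ℝ) ≤ c₂ * n := by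
  obtain ⟨d, rfl⟩ : ∃ d, k = d + 2 := ⟨k - 2, by omega⟩
  have hd : 1 ≤ d := by omega
  have hd' : (0 : ℝ) < d := by exact_mod_cast hd
  refine ⟨1 / (2 * d), 6, by positivity, by norm_num, 10 * d, fun n hn => ⟨?_, ?_⟩⟩
  · have h10 : 10 ≤ n / d := (Nat.le_div_iff_mul_le hd).2 hn
    have h1 : n / d - 4 ≤ maxRunningTime (twoGluedCliques (d + 2)) n := by
      refine (le_runningTime_towerGraph hd ?_).trans
        (runningTime_le_maxRunningTime hk (towerGraph d n 0))
      rw [Nat.sub_add_cancel (by omega)]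
      exact Nat.div_mul_le_self n d
    have h2 : n < (n / d + 1) * d := mul_comm d _ ▸ Nat.lt_mul_div_succ n hd
    have h3 : n ≤ 2 * d * maxRunningTime (twoGluedCliques (d + 2)) n := by
      have h4 : n / d + 1 ≤ 2 * maxRunningTime (twoGluedCliques (d + 2)) n := by omega
      calc n ≤ (n / d + 1) * d := h2.le
        _ ≤ (2 * maxRunningTime (twoGluedCliques (d + 2)) n) * d := Nat.mul_le_mul h4 le_rfl
        _ = _ := by ring
    rw [div_mul_eq_mul_div, one_mul, div_le_iff₀ (by positivity), mul_comm]
    exact_mod_cast h3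
  · have h1 := maxRunningTime_le hk n
    have h2 : maxRunningTime (twoGluedCliques (d + 2)) n ≤ 6 * n := by omega
    exact_mod_cast h2
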